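/- Let L be a finite-dimensional simple Leibniz algebra over ℂ, and suppose L = G ⊕ I as vector spaces, where G is a subalgebra of L that is a simple Lie algebra under the restricted bracket and I is the ideal generated by squares. Then every derivation d of L can be written as d = R_a + α + Δ, where a ∈ G, Δ : L → L is a linear map with Δ(I) = 0 and Δ(G) ⊆ I, and α : L → L is a linear map with α(G) = 0 and α(v) = λ·v for all v ∈ I for some scalar λ ∈ ℂ. -/

import Mathlib

/-!
The ideal `I` generated by squares is annihilated by all left multiplications (`[L, I] = 0`) and
is stable under every derivation `d`. The component of `d` from `G` to `G` along `I` is therefore a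
derivation of the Lie algebra `G`. A simple complex Lie algebra has nondegenerate Killing form
(Cartan's criterion), so this component is inner, say `R_a` with `a ∈ G`. The derivation
`T = d - R_a` maps `G` into `I`, so it commutes on `I` with the right action of `L`; its eigenspaces
in `I` are ideals of `L`, and since `I` is a minimal ideal, `T` is a scalar on `I`
(Schur's lemma).
-/

/-- `J` is a (two-sided) ideal of the Leibniz algebra `(L, br)`. -/
def IsLeibnizIdeal {L : Type*} [AddCommGroup L] [Module ℂ L]
    (br : L →ₗ[ℂ] L →ₗ[ℂ] L) (J : Submodule ℂ L) : Prop :=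
  (∀ a ∈ J, ∀ y : L, br a y ∈ J) ∧ (∀ a ∈ J, ∀ y : L, br y a ∈ J)

/-- The ideal of the Leibniz algebra `(L, br)` generated by the squares `[x,x]`. -/
def squaresIdeal {L : Type*} [AddCommGroup L] [Module ℂ L]
    (br : L →ₗ[ℂ] L →ₗ[ℂ] L) : Submodule ℂ L :=
  sInf {J | (∀ x : L, br x x ∈ J) ∧ IsLeibnizIdeal br J}

/-- The Leibniz algebra `(L, br)` is simple. -/
def IsSimpleLeibniz {L : Type*} [AddCommGroup L] [Module ℂ L]
    (br : L →ₗ[ℂ] L →ₗ[ℂ] L) : Prop :=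
  (∀ J : Submodule ℂ L, IsLeibnizIdeal br J → J = ⊥ ∨ J = squaresIdeal br ∨ J = ⊤) ∧
  Submodule.span ℂ {z : L | ∃ x y : L, z = br x y} ≠ squaresIdeal br

/-- Every derivation of a finite-dimensional simple complex Lie algebra, given by a bare bilinear
bracket `b`, is a right multiplication. -/
lemma exists_eq_right_mul_of_simple {V : Type*} [AddCommGroup V] [Module ℂ V]
    [FiniteDimensional ℂ V] (b : V →ₗ[ℂ] V →ₗ[ℂ] V)
    (hb : ∀ x y z : V, b x (b y z) = b (b x y) z - b (b x z) y)
    (hanti : ∀ x y : V, b x y = - b y x)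
    (hsimple : ∀ J : Submodule ℂ V, (∀ v ∈ J, ∀ g, b v g ∈ J) → J = ⊥ ∨ J = ⊤)
    (hnonab : ∃ x y : V, b x y ≠ 0)
    (D : V →ₗ[ℂ] V) (hD : ∀ x y : V, D (b x y) = b (D x) y + b x (D y)) :
    ∃ a : V, ∀ x, D x = b x a := by
  let _ : LieRing V :=
    { bracket := fun x y => b x y
      add_lie := fun x y z => by simp
      lie_add := fun x y z => by simp
      lie_self := fun x => by
        have h : b x x = - b x x := hanti x x
        have : IsAddTorsionFree V := .of_isTorsionFree ℂ V
        exact self_eq_neg.mp h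
      leibniz_lie := fun x y z => by
        change b x (b y z) = b (b x y) z + b y (b x z)
        rw [hb x y z, hanti (b x z) y, sub_neg_eq_add] }
  let _ : LieAlgebra ℂ V := { lie_smul := fun t x y => (b x).map_smul t y }
  have : LieAlgebra.IsSimple ℂ V :=
    { eq_bot_or_eq_top := fun J => by
        have h := hsimple J.toSubmodule (fun v hv g => by
          rw [hanti]
          exact neg_mem (J.lie_mem (x := g) hv))
        simpa using h
      non_abelian := fun h => by
        obtain ⟨x, y, hxy⟩ := hnonab
        exact hxy (h.trivial x y) }
  let D' : LieDerivation ℂ V V :=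
    { toLinearMap := D
      leibniz' := fun x y => by
        change D (b x y) = b x (D y) - b y (D x)
        rw [hD, hanti (D x) y]
        abel }
  obtain ⟨x, hx⟩ := LieDerivation.IsKilling.exists_eq_ad D'
  refine ⟨-x, fun y => ?_⟩
  have h : b x y = D y := by
    have h' : LieDerivation.ad ℂ V x y = D' y := by rw [hx]
    rwa [LieDerivation.ad_apply_apply] at h'
  rw [← h, hanti x y, map_neg]

section SquaresIdeal

variable {L : Type*} [AddCommGroup L] [Module ℂ L] (br : L →ₗ[ℂ] L →ₗ[ℂ] L)

lemma sq_mem_squaresIdeal (x : L) : br x x ∈ squaresIdeal br := by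
  rw [squaresIdeal, Submodule.mem_sInf]
  exact fun J hJ => hJ.1 x

lemma squaresIdeal_le {J : Submodule ℂ L} (h : ∀ x, br x x ∈ J) (hJ : IsLeibnizIdeal br J) :
    squaresIdeal br ≤ J :=
  sInf_le ⟨h, hJ⟩

lemma isLeibnizIdeal_squaresIdeal : IsLeibnizIdeal br (squaresIdeal br) := by
  constructor <;> intro a ha y <;> rw [squaresIdeal, Submodule.mem_sInf] at * <;> intro J hJ
  · exact hJ.2.1 a (ha J hJ) y
  · exact hJ.2.2 a (ha J hJ) y

variable {br}

lemma br_squaresIdeal_eq_zero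
    (hLeib : ∀ x y z : L, br x (br y z) = br (br x y) z - br (br x z) y)
    {v : L} (hv : v ∈ squaresIdeal br) (x : L) : br x v = 0 := by
  have h : squaresIdeal br ≤ LinearMap.ker br.flip := by
    refine squaresIdeal_le br (fun y => ?_) ⟨fun v hv y => ?_, fun v hv y => ?_⟩
    · ext x
      simp [hLeib]
    · have hv' : ∀ x, br x v = 0 := fun x => LinearMap.congr_fun hv x
      ext x
      simp [hLeib, hv']
    · have hv' : ∀ x, br x v = 0 := fun x => LinearMap.congr_fun hv x
      ext x
      simp [hv']
  exact LinearMap.congr_fun (h hv) x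

lemma derivation_mem_squaresIdeal {d : L →ₗ[ℂ] L}
    (hd : ∀ x y : L, d (br x y) = br (d x) y + br x (d y))
    {v : L} (hv : v ∈ squaresIdeal br) : d v ∈ squaresIdeal br := by
  have hI := isLeibnizIdeal_squaresIdeal br
  have h : squaresIdeal br ≤ squaresIdeal br ⊓ (squaresIdeal br).comap d := by
    refine squaresIdeal_le br (fun y => ⟨sq_mem_squaresIdeal br y, ?_⟩)
      ⟨fun v hv y => ⟨hI.1 v hv.1 y, ?_⟩, fun v hv y => ⟨hI.2 v hv.1 y, ?_⟩⟩
    · -- polarization: `[u,y] + [y,u] = [u+y,u+y] - [u,u] - [y,y]`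
      have key : d (br y y) = br (d y + y) (d y + y) - br (d y) (d y) - br y y := by
        rw [hd]
        simp only [map_add, LinearMap.add_apply]
        abel
      change d (br y y) ∈ squaresIdeal br
      rw [key]
      exact sub_mem (sub_mem (sq_mem_squaresIdeal br _) (sq_mem_squaresIdeal br _))
        (sq_mem_squaresIdeal br _)
    · change d (br v y) ∈ squaresIdeal br
      rw [hd]
      exact add_mem (hI.1 _ hv.2 _) (hI.1 _ hv.1 _)
    · change d (br y v) ∈ squaresIdeal br
      rw [hd]
      exact add_mem (hI.2 _ hv.1 _) (hI.2 _ hv.2 _)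
  exact (h hv).2

/-- Schur's lemma for the minimal ideal of squares. The eigenspace of `T` in that ideal `I` is
itself an ideal of `L`: it is stable under right multiplications by `hcomm`, and under left
multiplications because `[L, I] = 0`. -/
lemma exists_scalar_on_squaresIdeal [FiniteDimensional ℂ L]
    (hLeib : ∀ x y z : L, br x (br y z) = br (br x y) z - br (br x z) y)
    (hSimple : IsSimpleLeibniz br) (T : L →ₗ[ℂ] L)
    (hT : ∀ v ∈ squaresIdeal br, T v ∈ squaresIdeal br)
    (hcomm : ∀ v ∈ squaresIdeal br, ∀ y, T (br v y) = br (T v) y) :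
    ∃ μ : ℂ, ∀ v ∈ squaresIdeal br, T v = μ • v := by
  by_cases hbot : squaresIdeal br = ⊥
  · refine ⟨0, fun v hv => ?_⟩
    rw [hbot, Submodule.mem_bot] at hv
    simp [hv]
  have : Nontrivial (squaresIdeal br) := Submodule.nontrivial_iff_ne_bot.mpr hbot
  obtain ⟨μ, hμ⟩ := Module.End.exists_eigenvalue (T.restrict hT)
  obtain ⟨w, hw⟩ := hμ.exists_hasEigenvector
  have hwT : T w = μ • (w : L) := congrArg Subtype.val hw.apply_eq_smul
  have hI := isLeibnizIdeal_squaresIdeal br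
  have memJ : ∀ v, v ∈ squaresIdeal br ⊓ LinearMap.ker (T - μ • LinearMap.id) ↔
      v ∈ squaresIdeal br ∧ T v = μ • v := fun v => by
    simp [sub_eq_zero]
  have hJ : IsLeibnizIdeal br (squaresIdeal br ⊓ LinearMap.ker (T - μ • LinearMap.id)) := by
    refine ⟨fun v hv y => ?_, fun v hv y => ?_⟩
    · rw [memJ] at hv ⊢
      exact ⟨hI.1 _ hv.1 _, by rw [hcomm _ hv.1, hv.2, map_smul, LinearMap.smul_apply]⟩
    · rw [br_squaresIdeal_eq_zero hLeib ((memJ v).1 hv).1]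
      exact zero_mem _
  refine ⟨μ, fun v hv => ?_⟩
  rcases hSimple.1 _ hJ with h | h | h
  · have : (w : L) ∈ squaresIdeal br ⊓ LinearMap.ker (T - μ • LinearMap.id) :=
      (memJ _).2 ⟨w.2, hwT⟩
    rw [h, Submodule.mem_bot] at this
    exact absurd (Subtype.ext this) hw.2
  · exact ((memJ v).1 (h.symm.le hv)).2
  · exact ((memJ v).1 (h.symm.le Submodule.mem_top)).2

end SquaresIdeal

/-- Any derivation of a finite-dimensional complex simple Leibniz
algebra `L = G ⊕ I` decomposes as `R_a + α + Δ` with `α` scalar on `I`. -/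
theorem derivation_of_complex_simple_leibniz
    {L : Type*} [AddCommGroup L] [Module ℂ L] [FiniteDimensional ℂ L]
    (br : L →ₗ[ℂ] L →ₗ[ℂ] L)
    (hLeib : ∀ x y z : L, br x (br y z) = br (br x y) z - br (br x z) y)
    (hSimple : IsSimpleLeibniz br)
    (G : Submodule ℂ L)
    (hGclosed : ∀ x ∈ G, ∀ y ∈ G, br x y ∈ G)
    (hGanti : ∀ x ∈ G, ∀ y ∈ G, br x y = - br y x)
    (hGsimpleLie :
      (∀ J : Submodule ℂ L, J ≤ G → (∀ a ∈ J, ∀ g ∈ G, br a g ∈ J) → J = ⊥ ∨ J = G) ∧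
      ∃ x ∈ G, ∃ y ∈ G, br x y ≠ 0)
    (hdirect : G ⊓ squaresIdeal br = ⊥ ∧ G ⊔ squaresIdeal br = ⊤)
    (d : L →ₗ[ℂ] L)
    (hd : ∀ x y : L, d (br x y) = br (d x) y + br x (d y)) :
    ∃ a ∈ G, ∃ α Δ : L →ₗ[ℂ] L, ∃ lam : ℂ,
      d = br.flip a + α + Δ ∧
      (∀ g ∈ G, α g = 0) ∧
      (∀ v ∈ squaresIdeal br, α v = lam • v) ∧
      (∀ v ∈ squaresIdeal br, Δ v = 0) ∧
      (∀ g ∈ G, Δ g ∈ squaresIdeal br) := by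
  have hI := isLeibnizIdeal_squaresIdeal br
  have hc : IsCompl G (squaresIdeal br) :=
    ⟨disjoint_iff.mpr hdirect.1, codisjoint_iff.mpr hdirect.2⟩
  let p : L →ₗ[ℂ] G := G.projectionOnto (squaresIdeal br) hc
  have hpG : ∀ g : G, p g = g := fun g => Submodule.projectionOnto_apply_left hc g
  have hp : ∀ x, x - p x ∈ squaresIdeal br := fun x => by
    rw [← Submodule.ker_projectionOnto hc, LinearMap.mem_ker, map_sub, sub_eq_zero]
    exact (hpG (p x)).symm
  have hpI : ∀ v ∈ squaresIdeal br, p v = 0 := fun v hv =>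
    (Submodule.projectionOnto_apply_eq_zero_iff hc).2 hv
  have hz : ∀ v ∈ squaresIdeal br, ∀ x, br x v = 0 := fun v hv x =>
    br_squaresIdeal_eq_zero hLeib hv x
  have hbrp : ∀ x y, br x y = br x (p y) := fun x y => by
    rw [← sub_eq_zero, ← map_sub]
    exact hz _ (hp y) x
  let b : G →ₗ[ℂ] G →ₗ[ℂ] G :=
    LinearMap.mk₂ ℂ (fun x y => ⟨br x y, hGclosed x x.2 y y.2⟩)
      (fun _ _ _ => Subtype.ext (by simp)) (fun _ _ _ => Subtype.ext (by simp))
      (fun _ _ _ => Subtype.ext (by simp)) (fun _ _ _ => Subtype.ext (by simp))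
  have hbv : ∀ x y : G, ((b x y : G) : L) = br x y := fun x y => rfl
  obtain ⟨a, ha⟩ := exists_eq_right_mul_of_simple b
    (fun x y z => Subtype.ext (by simp [hbv, hLeib]))
    (fun x y => Subtype.ext (by simpa [hbv] using hGanti x x.2 y y.2))
    (fun J hJ => by
      have := hGsimpleLie.1 (J.map G.subtype) (Submodule.map_subtype_le G J) (by
        rintro _ ⟨v, hv, rfl⟩ g hg
        exact ⟨b v ⟨g, hg⟩, hJ v hv _, rfl⟩)
      rcases this with h | h
      · left
        exact Submodule.map_injective_of_injective G.injective_subtype (by simpa using h)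
      · right
        exact Submodule.map_injective_of_injective G.injective_subtype (by simpa using h))
    (by
      obtain ⟨x, hx, y, hy, h⟩ := hGsimpleLie.2
      exact ⟨⟨x, hx⟩, ⟨y, hy⟩, fun h0 => h (congrArg Subtype.val h0)⟩)
    (p ∘ₗ d ∘ₗ G.subtype) (fun x y => by
      -- modulo the squares ideal, `[d x, y]` is `[p (d x), y]` and `[x, d y] = [x, p (d y)]`
      have h1 : d (br x y) = (b (p (d x)) y : G) + (b x (p (d y)) : G)
          + br (d x - p (d x)) y := by
        rw [hd, hbv, hbv, ← hbrp, map_sub, LinearMap.sub_apply]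
        abel
      change p (d (br x y)) = b (p (d x)) y + b x (p (d y))
      rw [h1, map_add, map_add, hpG, hpG, hpI _ (hI.1 _ (hp _) _), add_zero])
  have ha' : ∀ g : G, (p (d g) : L) = br g a := fun g => congrArg Subtype.val (ha g)
  obtain ⟨μ, hμ⟩ := exists_scalar_on_squaresIdeal hLeib hSimple (d - br.flip a)
    (fun v hv => sub_mem (derivation_mem_squaresIdeal hd hv) (hI.1 v hv a))
    (fun v hv y => by
      -- `[v, d y] = [v, p (d (p y))] = [v, [y, a]]`, as `d` preserves the squares ideal
      have h1 : br v (d y) = br v (br y a) := by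
        have h2 : br v (d (y - p y)) = 0 :=
          hz _ (derivation_mem_squaresIdeal hd (hp y)) v
        have h3 : br v (br (y - p y) a) = 0 := hz _ (hI.1 _ (hp y) _) v
        rw [map_sub, map_sub, sub_eq_zero] at h2
        rw [map_sub, LinearMap.sub_apply, map_sub, sub_eq_zero] at h3
        rw [h2, h3, hbrp v (d (p y)), ha']
      simp only [LinearMap.sub_apply, LinearMap.flip_apply, map_sub]
      rw [hd, h1, hLeib]
      abel)
  have hμ' : ∀ v ∈ squaresIdeal br, d v - br v a = μ • v := hμ
  let q : L →ₗ[ℂ] L := LinearMap.id - G.subtype ∘ₗ p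
  have hq : ∀ x, q x = x - p x := fun x => rfl
  refine ⟨a, a.2, μ • q, d - br.flip a - μ • q, μ, by abel, fun g hg => ?_, fun v hv => ?_,
    fun v hv => ?_, fun g hg => ?_⟩
  · simp [hq, hpG ⟨g, hg⟩]
  · simp [hq, hpI v hv]
  · simp [hq, hpI v hv, hμ' v hv]
  · have h := hp (d g)
    rw [ha' ⟨g, hg⟩] at h
    simpa [hq, hpG ⟨g, hg⟩] using h
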